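/- Let X and Y be nonempty finite sets, let P_fwd : X × Y → ℝ be a probability distribution with P_fwd(x,y) > 0 for all (x,y), let q(y) := Σ_x P_fwd(x,y) be its Y-marginal, and let τ : Y → ℝ be a probability distribution on Y. Define P⋆(x,y) := P_fwd(x,y) τ(y) / q(y). Then P⋆ is a probability distribution on X × Y with Y-marginal τ, and for every probability distribution P on X × Y with Σ_x P(x,y) = τ(y) for all y, the Kullback–Leibler divergence satisfies D_KL(P ‖ P_fwd) ≥ D_KL(P⋆ ‖ P_fwd), with equality if and only if P = P⋆. -/

import Mathlib

/-- the classical minimum change principle for the Kullback–Leibler divergence: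
the distribution `P⋆(x,y) = P_fwd(x,y) τ(y) / q(y)` is a probability distribution on `X × Y`
with `Y`-marginal `τ`, and it is the unique minimizer of `D_KL(P ‖ P_fwd)` among probability
distributions `P` on `X × Y` with `Y`-marginal `τ`. -/
theorem stmt18 {X Y : Type*} [Fintype X] [Nonempty X] [Fintype Y] [Nonempty Y]
    (Pfwd : X × Y → ℝ) (hpos : ∀ p, 0 < Pfwd p) (hsum : ∑ p, Pfwd p = 1)
    (q : Y → ℝ) (hq : q = fun y => ∑ x, Pfwd (x, y))
    (τ : Y → ℝ) (hτ : ∀ y, 0 ≤ τ y) (hτsum : ∑ y, τ y = 1)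
    (Pstar : X × Y → ℝ) (hPstar : Pstar = fun p => Pfwd p * τ p.2 / q p.2) :
    (∀ p, 0 ≤ Pstar p) ∧ (∑ p, Pstar p = 1) ∧ (∀ y, ∑ x, Pstar (x, y) = τ y) ∧
      ∀ P : X × Y → ℝ, (∀ p, 0 ≤ P p) → (∑ p, P p = 1) → (∀ y, ∑ x, P (x, y) = τ y) →
        (∑ p, Pstar p * Real.log (Pstar p / Pfwd p)) ≤
            (∑ p, P p * Real.log (P p / Pfwd p)) ∧
          ((∑ p, P p * Real.log (P p / Pfwd p)) =
              (∑ p, Pstar p * Real.log (Pstar p / Pfwd p)) ↔ P = Pstar) := by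
  have hqpos : ∀ y, 0 < q y := fun y => by
    rw [hq]
    exact Finset.sum_pos (fun x _ => hpos _) Finset.univ_nonempty
  have hnn : ∀ p, 0 ≤ Pstar p := fun p => by
    rw [hPstar]
    exact div_nonneg (mul_nonneg (hpos p).le (hτ _)) (hqpos _).le
  have hmarg : ∀ y, ∑ x, Pstar (x, y) = τ y := fun y => by
    have h1 : ∑ x, Pfwd (x, y) = q y := by rw [hq]
    simp only [hPstar]
    rw [← Finset.sum_div, ← Finset.sum_mul, h1]
    have := (hqpos y).ne'
    field_simp
  have key : ∀ R : X × Y → ℝ, (∀ y, ∑ x, R (x, y) = τ y) → ∀ g : Y → ℝ,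
      ∑ p, R p * g p.2 = ∑ y, τ y * g y := by
    intro R hR g
    rw [Fintype.sum_prod_type_right]
    refine Finset.sum_congr rfl fun y _ => ?_
    rw [← hR y, Finset.sum_mul]
  have hone : ∑ p, Pstar p = 1 := by
    have := key Pstar hmarg (fun _ => 1)
    simpa [hτsum] using this
  refine ⟨hnn, hone, hmarg, ?_⟩
  intro P hP hPsum hPm
  have hstar : ∑ p, Pstar p * Real.log (Pstar p / Pfwd p)
      = ∑ y, τ y * Real.log (τ y / q y) := by
    rw [← key Pstar hmarg]
    refine Finset.sum_congr rfl fun p _ => ?_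
    have h1 : Pstar p / Pfwd p = τ p.2 / q p.2 := by
      have := (hqpos p.2).ne'
      have := (hpos p).ne'
      simp only [hPstar]
      field_simp
    rw [h1]
  have hd : ∀ p, 0 ≤ P p * Real.log (P p / Pfwd p) - P p * Real.log (τ p.2 / q p.2)
        - P p + Pstar p ∧
      (P p * Real.log (P p / Pfwd p) - P p * Real.log (τ p.2 / q p.2)
        - P p + Pstar p = 0 → P p = Pstar p) := by
    intro p
    rcases (hτ p.2).eq_or_lt with h0 | h0
    · have hPs : Pstar p = 0 := by simp [hPstar, ← h0]
      have hP0 : P p = 0 := by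
        have h2 := hPm p.2
        rw [← h0] at h2
        exact (Finset.sum_eq_zero_iff_of_nonneg (fun x _ => hP (x, p.2))).1 h2 p.1
          (Finset.mem_univ _)
      simp [hPs, hP0]
    · have hs : 0 < Pstar p := by
        rw [hPstar]
        exact div_pos (mul_pos (hpos p) h0) (hqpos _)
      have heq : P p * Real.log (P p / Pfwd p) - P p * Real.log (τ p.2 / q p.2)
          - P p + Pstar p = Pstar p * InformationTheory.klFun (P p / Pstar p) := by
        rw [InformationTheory.klFun_apply]
        rcases (hP p).eq_or_lt with hp | hp
        · simp [← hp]
        · have h3 : Real.log (P p / Pstar p)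
              = Real.log (P p / Pfwd p) - Real.log (τ p.2 / q p.2) := by
            have hq' := hqpos p.2
            have hf := hpos p
            rw [← Real.log_div (div_pos hp hf).ne' (div_pos h0 hq').ne']
            congr 1
            simp only [hPstar]
            field_simp
          rw [h3]
          field_simp
          ring
      have hr : 0 ≤ P p / Pstar p := div_nonneg (hP p) hs.le
      rw [heq]
      refine ⟨mul_nonneg hs.le (InformationTheory.klFun_nonneg hr), fun h => ?_⟩
      have h4 := (mul_eq_zero.1 h).resolve_left hs.ne'
      rw [InformationTheory.klFun_eq_zero_iff hr] at h4
      exact (div_eq_one_iff_eq hs.ne').1 h4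
  have hsumd : ∑ p, (P p * Real.log (P p / Pfwd p) - P p * Real.log (τ p.2 / q p.2)
        - P p + Pstar p) = ∑ p, P p * Real.log (P p / Pfwd p)
        - ∑ p, Pstar p * Real.log (Pstar p / Pfwd p) := by
    rw [Finset.sum_add_distrib, Finset.sum_sub_distrib, Finset.sum_sub_distrib, hone, hPsum,
      key P hPm (fun y => Real.log (τ y / q y)), hstar]
    ring
  refine ⟨?_, ?_, ?_⟩
  · have := Finset.sum_nonneg (s := Finset.univ) fun p _ => (hd p).1
    rw [hsumd] at this
    linarith
  · intro h
    rw [h, sub_self] at hsumd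
    funext p
    exact (hd p).2 ((Finset.sum_eq_zero_iff_of_nonneg fun p _ => (hd p).1).1 hsumd p
      (Finset.mem_univ _))
  · rintro rfl
    rfl
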